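/- For every k = 1, …, d, with λ_i := lim_{p→∞} λ_i(p) the limiting eigenvalues of Z_p := (A^{p/2} B^p A^{p/2})^{1/p}, one has λ_1 λ_2 ⋯ λ_k = max{ a_I b_J : I, J ⊆ {1,…,d}, |I| = |J| = k, det (V*W)_{I,J} ≠ 0 }, where (V*W)_{I,J} is the k×k submatrix of V*W with rows indexed by I and columns by J, a_I := ∏_{i∈I} a_i and b_J := ∏_{j∈J} b_j. -/

import Mathlib

open Matrix Filter Topology Finset
open scoped ComplexOrder

/-- Functional-calculus power of a (Hermitian, in practice positive semidefinite)
matrix, with the convention `0 ^ r = 0` for `r > 0`. -/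
noncomputable def psdPow {d : ℕ} (A : Matrix (Fin d) (Fin d) ℂ) (r : ℝ) :
    Matrix (Fin d) (Fin d) ℂ :=
  if hA : A.IsHermitian then
    (hA.eigenvectorUnitary : Matrix (Fin d) (Fin d) ℂ) *
      Matrix.diagonal (fun i => ((hA.eigenvalues i ^ r : ℝ) : ℂ)) *
      star (hA.eigenvectorUnitary : Matrix (Fin d) (Fin d) ℂ)
  else 0

/-- The eigenvalues of a Hermitian matrix, sorted in decreasing order
(with multiplicities). -/
noncomputable def eigsDesc {d : ℕ} (A : Matrix (Fin d) (Fin d) ℂ) : Fin d → ℝ :=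
  if hA : A.IsHermitian then
    fun i => hA.eigenvalues (Tuple.sort hA.eigenvalues i.rev)
  else 0

/-- `Zmat A B p = (A^{p/2} B^p A^{p/2})^{1/p}`. -/
noncomputable def Zmat {d : ℕ} (A B : Matrix (Fin d) (Fin d) ℂ) (p : ℝ) :
    Matrix (Fin d) (Fin d) ℂ :=
  psdPow (psdPow A (p / 2) * psdPow B p * psdPow A (p / 2)) (1 / p)


/-- Symmetrised Cauchy–Binet formula, summing over all functions. -/
lemma cauchyBinet_fun {k d : ℕ} (M : Matrix (Fin k) (Fin d) ℂ) (N : Matrix (Fin d) (Fin k) ℂ) :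
    (k.factorial : ℂ) * (M * N).det =
      ∑ f : Fin k → Fin d, (M.submatrix id f).det * (N.submatrix f id).det := by
  have h1 : (M * N).det = ∑ f : Fin k → Fin d, (∏ i, M i (f i)) * (N.submatrix f id).det := by
    have h := (detRowAlternating (n := Fin k) (R := ℂ)).toMultilinearMap.map_sum
      (fun (i : Fin k) (j : Fin d) => M i j • N j)
    have e : (M * N) = fun i => ∑ j, M i j • N j := by
      ext i j
      simp [Matrix.mul_apply]
    rw [e]
    refine Eq.trans h (Finset.sum_congr rfl fun f _ => ?_)
    exact (detRowAlternating (n := Fin k) (R := ℂ)).toMultilinearMap.map_smul_univ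
      (fun i => M i (f i)) (fun i => N (f i))
  have h2 : ∀ σ : Equiv.Perm (Fin k), (M * N).det =
      ∑ f : Fin k → Fin d, (Equiv.Perm.sign σ : ℂ) * (∏ i, M i (f (σ i))) *
        (N.submatrix f id).det := by
    intro σ
    rw [h1, ← (Equiv.arrowCongr σ (Equiv.refl (Fin d))).symm.sum_comp]
    refine Finset.sum_congr rfl fun f _ => ?_
    have := Matrix.det_permute σ (N.submatrix f id)
    rw [Matrix.submatrix_submatrix] at this
    have e : (Equiv.arrowCongr σ (Equiv.refl (Fin d))).symm f = f ∘ σ := by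
      ext i; simp [Equiv.arrowCongr]
    rw [e]
    simp only [Function.comp_apply]
    have t : (N.submatrix (f ∘ σ) id) = N.submatrix (f ∘ σ) (id ∘ id) := rfl
    rw [t, this]
    ring
  have h3 : ∑ σ : Equiv.Perm (Fin k), (M * N).det = (k.factorial : ℂ) * (M * N).det := by
    simp [Fintype.card_perm]
  rw [← h3, Finset.sum_congr rfl (fun σ _ => h2 σ), Finset.sum_comm]
  refine Finset.sum_congr rfl fun f _ => ?_
  rw [← Finset.sum_mul, ← Matrix.det_transpose (M.submatrix id f),
    Matrix.det_apply' (M.submatrix id f)ᵀ]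
  rfl

/-- Sum of the principal minors of order `k`. -/
noncomputable def minorSum {d : ℕ} (k : ℕ) (M : Matrix (Fin d) (Fin d) ℂ) : ℂ :=
  ∑ s ∈ (Finset.univ : Finset (Fin d)).powersetCard k,
    (M.submatrix (Subtype.val : s → Fin d) (Subtype.val : s → Fin d)).det

lemma minorSum_conj {d k : ℕ} (hk : k ≤ d) (V M : Matrix (Fin d) (Fin d) ℂ)
    (hV : Vᴴ * V = 1) : minorSum k (V * M * Vᴴ) = minorSum k M := by
  have hc : (V * M * Vᴴ).charpoly = M.charpoly := by
    rw [Matrix.charpoly_mul_comm, ← Matrix.mul_assoc, hV, Matrix.one_mul]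
  have h1 := Matrix.charpoly_coeff_eq_sum_minors (V * M * Vᴴ) k (by simpa using hk)
  have h2 := Matrix.charpoly_coeff_eq_sum_minors M k (by simpa using hk)
  rw [hc, h2] at h1
  exact (mul_left_cancel₀ (pow_ne_zero _ (by norm_num)) h1).symm

lemma minorSum_diagonal {d k : ℕ} (v : Fin d → ℂ) :
    minorSum k (Matrix.diagonal v) =
      ∑ s ∈ (Finset.univ : Finset (Fin d)).powersetCard k, ∏ i ∈ s, v i := by
  refine Finset.sum_congr rfl fun s _ => ?_
  rw [Matrix.submatrix_diagonal _ _ Subtype.val_injective, Matrix.det_diagonal]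
  exact Finset.prod_coe_sort s v

/-- Functional calculus does not depend on the diagonalization. -/
lemma funCalc_unique {d : ℕ} (V W : Matrix (Fin d) (Fin d) ℂ) (a b : Fin d → ℝ) (f : ℝ → ℝ)
    (hV : Vᴴ * V = 1) (hW : Wᴴ * W = 1)
    (h : V * Matrix.diagonal (fun i => (a i : ℂ)) * Vᴴ =
      W * Matrix.diagonal (fun i => (b i : ℂ)) * Wᴴ) :
    V * Matrix.diagonal (fun i => ((f (a i) : ℝ) : ℂ)) * Vᴴ =
      W * Matrix.diagonal (fun i => ((f (b i) : ℝ) : ℂ)) * Wᴴ := by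
  have hV' : V * Vᴴ = 1 := mul_eq_one_comm.mp hV
  have hW' : W * Wᴴ = 1 := mul_eq_one_comm.mp hW
  have key : (Wᴴ * V) * Matrix.diagonal (fun i => (a i : ℂ)) =
      Matrix.diagonal (fun i => (b i : ℂ)) * (Wᴴ * V) := by
    calc (Wᴴ * V) * Matrix.diagonal (fun i => (a i : ℂ))
        = Wᴴ * (V * Matrix.diagonal (fun i => (a i : ℂ)) * Vᴴ) * V := by
          simp only [Matrix.mul_assoc, hV, Matrix.mul_one]
      _ = _ := by
          rw [h]; simp only [← Matrix.mul_assoc, hW, Matrix.one_mul]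
  have key2 : (Wᴴ * V) * Matrix.diagonal (fun i => ((f (a i) : ℝ) : ℂ)) =
      Matrix.diagonal (fun i => ((f (b i) : ℝ) : ℂ)) * (Wᴴ * V) := by
    ext i j
    have hij := congrFun (congrFun key i) j
    rw [Matrix.mul_diagonal, Matrix.diagonal_mul] at hij ⊢
    by_cases h0 : (Wᴴ * V) i j = 0
    · simp [h0]
    · rw [mul_comm] at hij
      have : (a j : ℂ) = b i := mul_right_cancel₀ h0 hij
      have : a j = b i := by exact_mod_cast this
      rw [this, mul_comm]
  calc V * Matrix.diagonal (fun i => ((f (a i) : ℝ) : ℂ)) * Vᴴ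
      = W * ((Wᴴ * V) * Matrix.diagonal (fun i => ((f (a i) : ℝ) : ℂ))) * Vᴴ := by
        simp only [← Matrix.mul_assoc, hW', Matrix.one_mul]
    _ = _ := by
        rw [key2]; simp only [Matrix.mul_assoc, hV', Matrix.mul_one]

lemma diag_isHermitian {d : ℕ} (V : Matrix (Fin d) (Fin d) ℂ) (a : Fin d → ℝ) :
    (V * Matrix.diagonal (fun i => (a i : ℂ)) * Vᴴ).IsHermitian := by
  apply Matrix.isHermitian_mul_mul_conjTranspose
  rw [Matrix.isHermitian_diagonal_iff]
  intro i
  simp [IsSelfAdjoint]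

lemma spec {d : ℕ} {A : Matrix (Fin d) (Fin d) ℂ} (hA : A.IsHermitian) :
    A = (hA.eigenvectorUnitary : Matrix (Fin d) (Fin d) ℂ) *
      Matrix.diagonal (fun i => ((hA.eigenvalues i : ℝ) : ℂ)) *
      (hA.eigenvectorUnitary : Matrix (Fin d) (Fin d) ℂ)ᴴ := by
  have := hA.spectral_theorem
  rw [Unitary.conjStarAlgAut_apply] at this
  exact this

lemma eigU {d : ℕ} {A : Matrix (Fin d) (Fin d) ℂ} (hA : A.IsHermitian) :
    (hA.eigenvectorUnitary : Matrix (Fin d) (Fin d) ℂ)ᴴ *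
      (hA.eigenvectorUnitary : Matrix (Fin d) (Fin d) ℂ) = 1 :=
  Matrix.mem_unitaryGroup_iff'.mp hA.eigenvectorUnitary.2

lemma psdPow_eq {d : ℕ} (V : Matrix (Fin d) (Fin d) ℂ) (a : Fin d → ℝ) (hV : Vᴴ * V = 1)
    (r : ℝ) : psdPow (V * Matrix.diagonal (fun i => (a i : ℂ)) * Vᴴ) r =
      V * Matrix.diagonal (fun i => ((a i ^ r : ℝ) : ℂ)) * Vᴴ := by
  have hA := diag_isHermitian V a
  rw [psdPow, dif_pos hA]
  exact funCalc_unique _ V hA.eigenvalues a (fun x => x ^ r) (eigU hA) hV (spec hA).symm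

/-- The sorted eigenvalues of `psdPow M (1/p)` for `M` psd. -/
lemma eigsDesc_facts {d k : ℕ} (hk : k ≤ d) (M : Matrix (Fin d) (Fin d) ℂ) (hM : M.PosSemidef)
    (p : ℝ) (hp : 0 < p) :
    Antitone (eigsDesc (psdPow M (1 / p))) ∧ (∀ i, 0 ≤ eigsDesc (psdPow M (1 / p)) i) ∧
    minorSum k M = ((∑ s ∈ (Finset.univ : Finset (Fin d)).powersetCard k,
      ∏ i ∈ s, (eigsDesc (psdPow M (1 / p)) i) ^ p : ℝ) : ℂ) := by
  have hMh := hM.isHermitian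
  set Q := (hMh.eigenvectorUnitary : Matrix (Fin d) (Fin d) ℂ) with hQ
  set μ := hMh.eigenvalues with hμ
  have hμ0 : ∀ i, 0 ≤ μ i := hM.eigenvalues_nonneg
  have hZ : psdPow M (1 / p) = Q * Matrix.diagonal (fun i => ((μ i ^ (1 / p) : ℝ) : ℂ)) * Qᴴ := by
    conv_lhs => rw [spec hMh]
    exact psdPow_eq Q μ (eigU hMh) _
  have hZh : (psdPow M (1 / p)).IsHermitian := by
    rw [hZ]; exact diag_isHermitian Q (fun i => μ i ^ (1 / p))
  have hZp : (psdPow M (1 / p)).PosSemidef := by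
    rw [hZ]
    apply Matrix.PosSemidef.mul_mul_conjTranspose_same
    rw [Matrix.posSemidef_diagonal_iff]
    intro i
    exact_mod_cast Real.rpow_nonneg (hμ0 i) _
  set ν := hZh.eigenvalues with hν
  have hν0 : ∀ i, 0 ≤ ν i := hZp.eigenvalues_nonneg
  have hE : eigsDesc (psdPow M (1 / p)) = fun i => ν (Tuple.sort ν i.rev) := by
    rw [eigsDesc, dif_pos hZh]
  rw [hE]
  refine ⟨?_, fun i => hν0 _, ?_⟩
  · intro i j hij
    exact Tuple.monotone_sort ν (Fin.rev_le_rev.mpr hij)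
  · have h1 := funCalc_unique _ Q ν (fun i => μ i ^ (1 / p)) (fun x => x ^ p) (eigU hZh)
      (eigU hMh) ((spec hZh).symm.trans hZ)
    have h2 : (fun i => (((μ i ^ (1 / p)) ^ p : ℝ) : ℂ)) = fun i => (μ i : ℂ) := by
      ext i
      rw [← Real.rpow_mul (hμ0 i), one_div_mul_cancel hp.ne', Real.rpow_one]
    rw [h2, ← spec hMh] at h1
    rw [← h1, minorSum_conj hk _ _ (eigU hZh), minorSum_diagonal]
    push_cast
    let π : Equiv.Perm (Fin d) := Fin.revPerm.trans (Tuple.sort ν)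
    symm
    refine Finset.sum_bij' (fun s _ => s.map π.toEmbedding) (fun s _ => s.map π.symm.toEmbedding)
      ?_ ?_ ?_ ?_ ?_
    · intro s hs; simpa using hs
    · intro s hs; simpa using hs
    · intro s hs; ext x; simp
    · intro s hs; ext x; simp
    · intro s hs
      rw [Finset.prod_map]
      rfl

lemma prod_le_top {d k : ℕ} (hk : k ≤ d) (x : Fin d → ℝ) (hx : Antitone x) (h0 : ∀ i, 0 ≤ x i)
    (s : Finset (Fin d)) (hs : s.card = k) :
    ∏ i ∈ s, x i ≤ ∏ i ∈ Finset.univ.filter (fun i : Fin d => (i : ℕ) < k), x i := by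
  have e1 : ∏ i ∈ s, x i = ∏ r : Fin k, x (s.orderEmbOfFin hs r) := by
    conv_lhs => rw [← Finset.map_orderEmbOfFin_univ s hs]
    rw [Finset.prod_map]; rfl
  have e2 : ∏ i ∈ Finset.univ.filter (fun i : Fin d => (i : ℕ) < k), x i =
      ∏ r : Fin k, x (Fin.castLE hk r) := by
    have : Finset.univ.filter (fun i : Fin d => (i : ℕ) < k) =
        Finset.univ.map (Fin.castLEEmb hk) := by
      ext i
      simp only [Finset.mem_filter, Finset.mem_univ, true_and, Finset.mem_map]
      constructor
      · intro h; exact ⟨⟨i, h⟩, by ext; simp⟩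
      · rintro ⟨r, rfl⟩; simp
    rw [this, Finset.prod_map]; rfl
  rw [e1, e2]
  refine Finset.prod_le_prod (fun i _ => h0 _) fun r _ => hx ?_
  have : ∀ (n : ℕ) (hn : n < k), n ≤ (s.orderEmbOfFin hs ⟨n, hn⟩ : ℕ) := by
    intro n
    induction n with
    | zero => intro _; omega
    | succ n ih =>
      intro hn
      have h1 := ih (by omega)
      have h2 : s.orderEmbOfFin hs ⟨n, by omega⟩ < s.orderEmbOfFin hs ⟨n + 1, hn⟩ :=
        (s.orderEmbOfFin hs).strictMono (by simp [Fin.lt_def])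
      have h3 : (s.orderEmbOfFin hs ⟨n, by omega⟩ : ℕ) < s.orderEmbOfFin hs ⟨n + 1, hn⟩ := h2
      omega
  exact this r r.2

/-- Order embedding of `Fin k` onto `s`, total in `s`. -/
noncomputable def enumS {d : ℕ} (k : ℕ) (s : {s : Finset (Fin d) // s.card = k}) : Fin k → Fin d :=
  fun r => (s.1.orderIsoOfFin s.2 r : Fin d)

lemma prod_enumS {d k : ℕ} (s : {s : Finset (Fin d) // s.card = k}) (x : Fin d → ℝ) :
    ∏ r, x (enumS k s r) = ∏ i ∈ s.1, x i := by
  rw [← Finset.prod_coe_sort s.1 x]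
  exact Fintype.prod_equiv (s.1.orderIsoOfFin s.2).toEquiv _ _ (fun r => rfl)

lemma minorSum_enum {d k : ℕ} (M : Matrix (Fin d) (Fin d) ℂ) :
    minorSum k M = ∑ s : {s : Finset (Fin d) // s.card = k},
      (M.submatrix (enumS k s) (enumS k s)).det := by
  unfold minorSum
  rw [Finset.sum_subtype ((Finset.univ : Finset (Fin d)).powersetCard k)
    (p := fun s => s.card = k) (by intro s; simp)
    (f := fun s => (M.submatrix (Subtype.val : s → Fin d) (Subtype.val : s → Fin d)).det)]
  refine Finset.sum_congr rfl fun s _ => ?_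
  rw [← Matrix.det_submatrix_equiv_self (s.1.orderIsoOfFin s.2).toEquiv]
  rfl

lemma minor_formula {d k : ℕ} (U : Matrix (Fin d) (Fin d) ℂ) (α β : Fin d → ℝ) :
    (k.factorial : ℂ) * minorSum k (Matrix.diagonal (fun i => (α i : ℂ)) * U *
      Matrix.diagonal (fun i => (β i : ℂ)) * (Uᴴ * Matrix.diagonal (fun i => (α i : ℂ)))) =
    ((∑ s : {s : Finset (Fin d) // s.card = k}, ∑ f : Fin k → Fin d,
      Complex.normSq (U.submatrix (enumS k s) f).det *
        ((∏ i ∈ s.1, α i ^ 2) * ∏ r, β (f r)) : ℝ) : ℂ) := by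
  rw [minorSum_enum, Finset.mul_sum]
  push_cast
  refine Finset.sum_congr rfl fun s _ => ?_
  rw [Matrix.submatrix_mul _ _ (enumS k s) id (enumS k s) Function.bijective_id, cauchyBinet_fun]
  refine Finset.sum_congr rfl fun f _ => ?_
  have e1 : ((Matrix.diagonal (fun i => (α i : ℂ)) * U *
      Matrix.diagonal (fun i => (β i : ℂ))).submatrix (enumS k s) id).submatrix id f =
      Matrix.diagonal (fun r => (α (enumS k s r) : ℂ)) * U.submatrix (enumS k s) f *
        Matrix.diagonal (fun r => (β (f r) : ℂ)) := by
    ext i j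
    simp [Matrix.mul_diagonal, Matrix.diagonal_mul]
  have e2 : ((Uᴴ * Matrix.diagonal (fun i => (α i : ℂ))).submatrix id (enumS k s)).submatrix f id =
      (U.submatrix (enumS k s) f)ᴴ * Matrix.diagonal (fun r => (α (enumS k s r) : ℂ)) := by
    ext i j
    simp [Matrix.mul_diagonal]
  rw [e1, e2, Matrix.det_mul, Matrix.det_mul, Matrix.det_mul, Matrix.det_diagonal,
    Matrix.det_diagonal, Matrix.det_conjTranspose, Complex.normSq_eq_conj_mul_self]
  have e3 : (∏ i ∈ s.1, (α i : ℂ) ^ 2) = (∏ r, (α (enumS k s r) : ℂ)) ^ 2 := by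
    have := prod_enumS s (fun i => α i ^ 2)
    rw [Finset.prod_pow] at this
    exact_mod_cast this.symm
  rw [e3]
  simp only [RCLike.star_def]
  ring

/-- A nonzero minor with columns `f` gives one with columns in increasing order. -/
lemma exists_finset_of_det_ne {d k : ℕ} (U : Matrix (Fin d) (Fin d) ℂ) (g f : Fin k → Fin d)
    (h : (U.submatrix g f).det ≠ 0) (b : Fin d → ℝ) :
    ∃ J : {s : Finset (Fin d) // s.card = k}, (U.submatrix g (enumS k J)).det ≠ 0 ∧
      ∏ r, b (f r) = ∏ j ∈ J.1, b j := by
  have hf : Function.Injective f := by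
    intro i j hij
    by_contra hne
    exact h (Matrix.det_zero_of_column_eq hne (fun r => by simp [hij]))
  let J : {s : Finset (Fin d) // s.card = k} :=
    ⟨Finset.univ.map ⟨f, hf⟩, by simp⟩
  refine ⟨J, ?_, by simp [J]⟩
  have hm : ∀ r, f r ∈ J.1 := fun r => by simp [J]
  let τ : Fin k → Fin k := fun r => (J.1.orderIsoOfFin J.2).symm ⟨f r, hm r⟩
  have hτ : ∀ r, enumS k J (τ r) = f r := fun r => by simp [enumS, τ]
  have hinj : Function.Injective τ := fun i j hij => hf (by rw [← hτ, ← hτ, hij])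
  let σ : Equiv.Perm (Fin k) := Equiv.ofBijective τ (Finite.injective_iff_bijective.mp hinj)
  intro h0
  apply h
  have e : U.submatrix g f = (U.submatrix g (enumS k J)).submatrix id σ := by
    ext i j
    simp [σ, hτ]
  rw [e, Matrix.det_permute', h0, mul_zero]

/-- Comparison of `p`-th powers in the limit. -/
lemma le_of_rpow_le {P Q : ℝ → ℝ} {L m C : ℝ} (hC : 0 < C)
    (hP0 : ∀ p, 0 < p → 0 ≤ P p) (hQ0 : ∀ p, 0 < p → 0 ≤ Q p)
    (hP : Tendsto P atTop (𝓝 L)) (hQ : Tendsto Q atTop (𝓝 m))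
    (h : ∀ p, 0 < p → P p ^ p ≤ C * Q p ^ p) : L ≤ m := by
  have h1 : Tendsto (fun p : ℝ => C ^ (1 / p) * Q p) atTop (𝓝 (C ^ (0 : ℝ) * m)) := by
    refine Tendsto.mul ?_ hQ
    refine (Real.continuousAt_const_rpow hC.ne').tendsto.comp ?_
    have h0 := tendsto_inv_atTop_zero (𝕜 := ℝ)
    simp only [← one_div] at h0
    exact h0
  rw [Real.rpow_zero, one_mul] at h1
  refine le_of_tendsto_of_tendsto hP h1 ?_
  filter_upwards [eventually_gt_atTop (0 : ℝ)] with p hp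
  have h2 := Real.rpow_le_rpow (Real.rpow_nonneg (hP0 p hp) p) (h p hp) (one_div_nonneg.mpr hp.le)
  rwa [← Real.rpow_mul (hP0 p hp), mul_one_div_cancel hp.ne', Real.rpow_one,
    Real.mul_rpow hC.le (Real.rpow_nonneg (hQ0 p hp) p), ← Real.rpow_mul (hQ0 p hp),
    mul_one_div_cancel hp.ne', Real.rpow_one] at h2

/-- For every `k = 1,…,d`, the product `λ_1 ⋯ λ_k` of the limiting eigenvalues of
`Z_p = (A^{p/2} B^p A^{p/2})^{1/p}` equals
`max{a_I b_J : |I| = |J| = k, det (V*W)_{I,J} ≠ 0}`. -/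
theorem anti_lie_trotter_eigenvalue_products
    {d : ℕ} (A B V W : Matrix (Fin d) (Fin d) ℂ) (a b : Fin d → ℝ)
    (hA : A.PosSemidef) (hB : B.PosSemidef)
    (hV : V ∈ Matrix.unitaryGroup (Fin d) ℂ)
    (hW : W ∈ Matrix.unitaryGroup (Fin d) ℂ)
    (ha : Antitone a) (hb : Antitone b)
    (ha0 : ∀ i, 0 ≤ a i) (hb0 : ∀ i, 0 ≤ b i)
    (hAd : A = V * Matrix.diagonal (fun i => (a i : ℂ)) * Vᴴ)
    (hBd : B = W * Matrix.diagonal (fun i => (b i : ℂ)) * Wᴴ)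
    (lam : Fin d → ℝ)
    (hlam : ∀ i, Tendsto (fun p : ℝ => eigsDesc (Zmat A B p) i) atTop (𝓝 (lam i)))
    (k : ℕ) (hk1 : 1 ≤ k) (hkd : k ≤ d) :
    IsGreatest
      {x : ℝ | ∃ (I J : Finset (Fin d)) (hI : I.card = k) (hJ : J.card = k),
        ((Vᴴ * W).submatrix (fun r : Fin k => ((I.orderIsoOfFin hI r : Fin d)))
            (fun c : Fin k => ((J.orderIsoOfFin hJ c : Fin d)))).det ≠ 0 ∧
        x = (∏ i ∈ I, a i) * ∏ j ∈ J, b j}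
      (∏ i ∈ Finset.univ.filter (fun i : Fin d => (i : ℕ) < k), lam i) := by
  classical
  have hV1 : Vᴴ * V = 1 := Matrix.mem_unitaryGroup_iff'.mp hV
  have hW1 : Wᴴ * W = 1 := Matrix.mem_unitaryGroup_iff'.mp hW
  have hV2 : V * Vᴴ = 1 := mul_eq_one_comm.mp hV1
  have hW2 : W * Wᴴ = 1 := mul_eq_one_comm.mp hW1
  set U := Vᴴ * W with hU
  have hUU : U * Uᴴ = 1 := by
    rw [hU, Matrix.conjTranspose_mul, Matrix.conjTranspose_conjTranspose, Matrix.mul_assoc,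
      ← Matrix.mul_assoc W, hW2, Matrix.one_mul, hV1]
  have hfac : (0 : ℝ) < k.factorial := by exact_mod_cast k.factorial_pos
  -- index set and data
  let S := {s : Finset (Fin d) // s.card = k}
  let c : S × (Fin k → Fin d) → ℝ := fun q => Complex.normSq (U.submatrix (enumS k q.1) q.2).det
  let x : S × (Fin k → Fin d) → ℝ := fun q => (∏ i ∈ q.1.1, a i) * ∏ r, b (q.2 r)
  have hc0 : ∀ q, 0 ≤ c q := fun q => Complex.normSq_nonneg _
  have hx0 : ∀ q, 0 ≤ x q := fun q =>
    mul_nonneg (Finset.prod_nonneg fun i _ => ha0 i) (Finset.prod_nonneg fun i _ => hb0 _)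
  have hcne : ∀ q, c q ≠ 0 ↔ (U.submatrix (enumS k q.1) q.2).det ≠ 0 := fun q => by
    simp [c]
  -- nonvanishing
  have hne : ∃ q, c q ≠ 0 := by
    by_contra hcon
    push Not at hcon
    have h1 := minor_formula (k := k) U (fun _ => 1) (fun _ => 1)
    have h2 : (∑ s : S, ∑ f : Fin k → Fin d, Complex.normSq (U.submatrix (enumS k s) f).det *
        ((∏ i ∈ s.1, (1 : ℝ) ^ 2) * ∏ r : Fin k, (1 : ℝ))) = 0 :=
      Finset.sum_eq_zero fun s _ => Finset.sum_eq_zero fun f _ => by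
        have := hcon (s, f)
        simp only [c] at this
        rw [this, zero_mul]
    rw [h2] at h1
    have h3 : (Matrix.diagonal (fun _ : Fin d => ((1 : ℝ) : ℂ))) = 1 := by simp
    rw [h3, Matrix.one_mul, Matrix.mul_one, Matrix.mul_one, hUU, ← h3, minorSum_diagonal] at h1
    have h4 : d.choose k = 0 := by
      simpa [Nat.factorial_ne_zero] using h1
    exact absurd h4 (Nat.choose_pos hkd).ne'
  obtain ⟨q0, hq0, hmax⟩ := Finset.exists_max_image (Finset.univ.filter fun q => c q ≠ 0) x
    (by obtain ⟨q, hq⟩ := hne; exact ⟨q, by simpa using hq⟩)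
  have hq0' : c q0 ≠ 0 := by simpa using hq0
  have hmax' : ∀ q, c q ≠ 0 → x q ≤ x q0 := fun q hq => hmax q (by simpa using hq)
  -- finite p identity
  let l : ℝ → Fin d → ℝ := fun p => eigsDesc (Zmat A B p)
  let P : ℝ → ℝ := fun p => ∏ i ∈ Finset.univ.filter (fun i : Fin d => (i : ℕ) < k), l p i
  have key : ∀ p : ℝ, 0 < p → Antitone (l p) ∧ (∀ i, 0 ≤ l p i) ∧
      (k.factorial : ℝ) * ∑ s ∈ (Finset.univ : Finset (Fin d)).powersetCard k,
        (∏ i ∈ s, l p i) ^ p = ∑ q, c q * x q ^ p := by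
    intro p hp
    let D := Matrix.diagonal (fun i => ((a i ^ (p / 2) : ℝ) : ℂ))
    let E := Matrix.diagonal (fun i => ((b i ^ p : ℝ) : ℂ))
    have hM : psdPow A (p / 2) * psdPow B p * psdPow A (p / 2) =
        V * (D * U * E * (Uᴴ * D)) * Vᴴ := by
      rw [hAd, hBd, psdPow_eq V a hV1, psdPow_eq W b hW1, hU, Matrix.conjTranspose_mul,
        Matrix.conjTranspose_conjTranspose]
      simp only [D, E, Matrix.mul_assoc]
    have hDh : Dᴴ = D := by
      ext i j
      simp only [D, Matrix.conjTranspose_apply, Matrix.diagonal_apply]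
      by_cases h : i = j
      · subst h; simp
      · simp [h, Ne.symm h]
    have hMp : (psdPow A (p / 2) * psdPow B p * psdPow A (p / 2)).PosSemidef := by
      rw [hM]
      apply Matrix.PosSemidef.mul_mul_conjTranspose_same
      have : D * U * E * (Uᴴ * D) = (D * U) * E * (D * U)ᴴ := by
        rw [Matrix.conjTranspose_mul D U, hDh]
      rw [this]
      apply Matrix.PosSemidef.mul_mul_conjTranspose_same
      rw [Matrix.posSemidef_diagonal_iff]
      intro i
      exact_mod_cast Real.rpow_nonneg (hb0 i) _
    obtain ⟨h1, h2, h3⟩ := eigsDesc_facts hkd _ hMp p hp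
    refine ⟨h1, h2, ?_⟩
    rw [hM, minorSum_conj hkd _ _ hV1] at h3
    have h4 := minor_formula (k := k) U (fun i => a i ^ (p / 2)) (fun i => b i ^ p)
    rw [h3] at h4
    have h5 : (k.factorial : ℝ) * (∑ s ∈ (Finset.univ : Finset (Fin d)).powersetCard k,
        ∏ i ∈ s, (l p i) ^ p) = ∑ s : S, ∑ f : Fin k → Fin d,
          Complex.normSq (U.submatrix (enumS k s) f).det *
            ((∏ i ∈ s.1, (a i ^ (p / 2)) ^ 2) * ∏ r, b (f r) ^ p) := by
      rw [← hM] at h4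
      exact_mod_cast h4
    rw [Fintype.sum_prod_type]
    convert h5 using 2
    · refine Finset.sum_congr rfl fun s _ => ?_
      exact (Real.finsetProd_rpow _ _ (fun i _ => h2 i) p).symm
    · refine Finset.sum_congr rfl fun f _ => ?_
      simp only [c, x]
      rw [Real.mul_rpow (Finset.prod_nonneg fun i _ => ha0 i) (Finset.prod_nonneg fun i _ => hb0 _),
        ← Real.finsetProd_rpow _ _ (fun i _ => ha0 i), ← Real.finsetProd_rpow _ _ (fun i _ => hb0 _)]
      congr 2
      refine Finset.prod_congr rfl fun i _ => ?_
      rw [← Real.rpow_natCast, ← Real.rpow_mul (ha0 i)]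
      congr 1
      push_cast
      ring
  have hP0 : ∀ p, 0 < p → 0 ≤ P p := fun p hp => Finset.prod_nonneg fun i _ => (key p hp).2.1 i
  have hPlim : Tendsto P atTop
      (𝓝 (∏ i ∈ Finset.univ.filter (fun i : Fin d => (i : ℕ) < k), lam i)) :=
    tendsto_finsetProd _ fun i _ => hlam i
  have hcard : (Finset.univ.filter (fun i : Fin d => (i : ℕ) < k)).card = k := by
    rw [Fin.card_filter_val_lt]
    exact min_eq_right hkd
  have hch : (0 : ℝ) < d.choose k := by exact_mod_cast Nat.choose_pos hkd
  have hc0' : 0 < c q0 := lt_of_le_of_ne (hc0 q0) (Ne.symm hq0')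
  have hsum : 0 < ∑ q, c q := lt_of_lt_of_le hc0'
    (Finset.single_le_sum (fun q _ => hc0 q) (Finset.mem_univ q0))
  -- upper bound
  have hle : ∏ i ∈ Finset.univ.filter (fun i : Fin d => (i : ℕ) < k), lam i ≤ x q0 := by
    refine le_of_rpow_le (C := (∑ q, c q) / k.factorial) (div_pos hsum hfac) hP0
      (fun _ _ => hx0 q0) hPlim tendsto_const_nhds fun p hp => ?_
    obtain ⟨-, h2, h3⟩ := key p hp
    have e1 : P p ^ p ≤ ∑ s ∈ (Finset.univ : Finset (Fin d)).powersetCard k,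
        (∏ i ∈ s, l p i) ^ p :=
      Finset.single_le_sum (f := fun s => (∏ i ∈ s, l p i) ^ p)
        (fun s _ => Real.rpow_nonneg (Finset.prod_nonneg fun i _ => h2 i) _)
        (by simpa using hcard)
    have e2 : ∑ q, c q * x q ^ p ≤ (∑ q, c q) * x q0 ^ p := by
      rw [Finset.sum_mul]
      refine Finset.sum_le_sum fun q _ => ?_
      by_cases hq : c q = 0
      · simp [hq]
      · exact mul_le_mul_of_nonneg_left (Real.rpow_le_rpow (hx0 q) (hmax' q hq) hp.le) (hc0 q)
    rw [div_mul_eq_mul_div, le_div_iff₀ hfac]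
    nlinarith
  -- lower bound
  have hge : x q0 ≤ ∏ i ∈ Finset.univ.filter (fun i : Fin d => (i : ℕ) < k), lam i := by
    refine le_of_rpow_le (C := k.factorial * d.choose k / c q0)
      (div_pos (mul_pos hfac hch) hc0') (fun _ _ => hx0 q0) hP0 tendsto_const_nhds hPlim
      fun p hp => ?_
    obtain ⟨h1, h2, h3⟩ := key p hp
    have e1 : c q0 * x q0 ^ p ≤ ∑ q, c q * x q ^ p :=
      Finset.single_le_sum (f := fun q => c q * x q ^ p)
        (fun q _ => mul_nonneg (hc0 q) (Real.rpow_nonneg (hx0 q) _)) (Finset.mem_univ q0)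
    have e2 : ∑ s ∈ (Finset.univ : Finset (Fin d)).powersetCard k,
        (∏ i ∈ s, l p i) ^ p ≤ d.choose k * P p ^ p := by
      have := Finset.sum_le_card_nsmul ((Finset.univ : Finset (Fin d)).powersetCard k)
        (fun s => (∏ i ∈ s, l p i) ^ p) (P p ^ p) (fun s hs =>
          Real.rpow_le_rpow (Finset.prod_nonneg fun i _ => h2 i)
            (prod_le_top hkd (l p) h1 h2 s (by simpa using hs)) hp.le)
      simpa using this
    rw [div_mul_eq_mul_div, le_div_iff₀ hc0', mul_comm, mul_assoc]
    rw [← h3] at e1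
    exact e1.trans (mul_le_mul_of_nonneg_left e2 hfac.le)
  have heq := le_antisymm hle hge
  rw [heq]
  constructor
  · obtain ⟨J, hJ, hJb⟩ := exists_finset_of_det_ne U _ _ ((hcne q0).1 hq0') b
    refine ⟨q0.1.1, J.1, q0.1.2, J.2, hJ, ?_⟩
    simp only [x]
    rw [hJb]
  · rintro y ⟨I, J, hI, hJ, hdet, rfl⟩
    have := hmax' (⟨I, hI⟩, enumS k ⟨J, hJ⟩) ((hcne _).2 hdet)
    simp only [x] at this
    rw [prod_enumS] at this
    exact this
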